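/- For any subset σ ⊆ B: σ belongs to M (the set of simplices surviving the first phase of the matching construction) if and only if σ is not contained in B_s for any s ∈ {1,…,m}. -/

import Mathlib

/-!
A subset `σ` of `B` can only be matched by adding some `a_i`, and it survives as soon as no `a_i`
can be added to it. Conversely, consider the first `a_i` that can be added: both `σ` and
`σ ∪ {a_i}` are untouched by the earlier steps, because faces of simplices are simplices, so the
two are matched at step `i`. Hence `σ` survives iff every `a_i` has a neighbour in `σ`. The
non-neighbours of `a_i` in `B` form the arc `B_{i+d}`, and `i ↦ i + d` permutes the subscripts.
-/

open Finset

/-- The graph `G_m^d` on vertex set `Fin m ⊕ Fin m` (0-based indexing):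
`Sum.inl i` is the vertex `a_{i+1}` and `Sum.inr j` is the vertex `b_{j+1}` of the paper;
`a_i` is adjacent to `b_j` iff `(j - i) mod m ∈ {0, …, d-1}`. -/
def Gmd (m d : ℕ) : SimpleGraph (Fin m ⊕ Fin m) :=
  SimpleGraph.fromRel (fun u v =>
    ∃ i j : Fin m, u = Sum.inl i ∧ v = Sum.inr j ∧ (j.val + m - i.val) % m < d)

/-- A finite set of vertices is independent iff no two of its elements are adjacent. -/
def IsInd (m d : ℕ) (σ : Finset (Fin m ⊕ Fin m)) : Prop :=
  ∀ u ∈ σ, ∀ v ∈ σ, ¬ (Gmd m d).Adj u v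

/-- The face poset `P` of the independence complex `Ind (G_m^d)` (ordered by `⊆`),
including the empty simplex. -/
def faceP (m d : ℕ) : Set (Finset (Fin m ⊕ Fin m)) := {σ | IsInd m d σ}

/-- One step of the matching construction: `S_x(T) = {σ ∈ T | x ∉ σ, σ ∪ {x} ∈ T}`. -/
def stepS {α : Type*} [DecidableEq α] (x : α) (T : Set (Finset α)) : Set (Finset α) :=
  {σ | σ ∈ T ∧ x ∉ σ ∧ insert x σ ∈ T}

/-- The survivors of one step: `T \ (S_x(T) ∪ μ_x(S_x(T)))`. -/
def stepSurv {α : Type*} [DecidableEq α] (x : α) (T : Set (Finset α)) : Set (Finset α) :=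
  T \ (stepS x T ∪ (insert x) '' (stepS x T))

/-- Iterating the matching construction along a list of vertices. -/
def phase {α : Type*} [DecidableEq α] (T : Set (Finset α)) (l : List α) : Set (Finset α) :=
  l.foldl (fun T x => stepSurv x T) T

/-- The list `a_1, …, a_m`. -/
def listA (m : ℕ) : List (Fin m ⊕ Fin m) := (List.finRange m).map Sum.inl
/-- The list `b_1, …, b_m`. -/
def listB (m : ℕ) : List (Fin m ⊕ Fin m) := (List.finRange m).map Sum.inr

/-- `S_{a_{i+1}}` (0-based `i`): the set matched with `a_{i+1}` at stage `i+1` of phase one. -/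
def Sa (m d : ℕ) (i : Fin m) : Set (Finset (Fin m ⊕ Fin m)) :=
  stepS (Sum.inl i) (phase (faceP m d) ((listA m).take i.val))

/-- `M = P \ (S_1 ∪ μ_1(S_1))`, the simplices surviving phase one. -/
def setM (m d : ℕ) : Set (Finset (Fin m ⊕ Fin m)) := phase (faceP m d) (listA m)

/-- `S_{b_{i+1}}` (0-based `i`): the set matched with `b_{i+1}` at stage `i+1` of phase two. -/
def Sb (m d : ℕ) (i : Fin m) : Set (Finset (Fin m ⊕ Fin m)) :=
  stepS (Sum.inr i) (phase (setM m d) ((listB m).take i.val))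

/-- `𝒮_{a_{i+1}} = S_{a_{i+1}} ∪ μ_{a_{i+1}}(S_{a_{i+1}})`. -/
def scriptSa (m d : ℕ) (i : Fin m) : Set (Finset (Fin m ⊕ Fin m)) :=
  Sa m d i ∪ (insert (Sum.inl i)) '' (Sa m d i)

/-- `𝒮_{b_{i+1}} = S_{b_{i+1}} ∪ μ_{b_{i+1}}(S_{b_{i+1}})`. -/
def scriptSb (m d : ℕ) (i : Fin m) : Set (Finset (Fin m ⊕ Fin m)) :=
  Sb m d i ∪ (insert (Sum.inr i)) '' (Sb m d i)

/-- The critical cells `C = P \ (S ∪ μ(S))`. -/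
def setC (m d : ℕ) : Set (Finset (Fin m ⊕ Fin m)) :=
  faceP m d \ ((⋃ i : Fin m, scriptSa m d i) ∪ (⋃ i : Fin m, scriptSb m d i))

/-- The matching relation: `MatchRel σ τ` iff `τ = μ(σ)` for `σ ∈ S = S_1 ∪ S_2`. -/
def MatchRel (m d : ℕ) (σ τ : Finset (Fin m ⊕ Fin m)) : Prop :=
  (∃ i : Fin m, σ ∈ Sa m d i ∧ τ = insert (Sum.inl i) σ) ∨
  (∃ i : Fin m, σ ∈ Sb m d i ∧ τ = insert (Sum.inr i) σ)

/-- `B_{s+1} = {b_{s+1}, b_{s+2}, …, b_{s+m-d}}` (0-based `s`, subscripts mod `m`). -/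
def Bset (m d : ℕ) (s : Fin m) : Finset (Fin m ⊕ Fin m) :=
  (Finset.univ.filter (fun j : Fin m => (j.val + m - s.val) % m < m - d)).image Sum.inr

/-- `b_{n+1} ∈ σ` (0-based subscript `n`). -/
def hasB (m : ℕ) (σ : Finset (Fin m ⊕ Fin m)) (n : ℕ) : Prop :=
  ∃ j : Fin m, j.val = n ∧ Sum.inr j ∈ σ

/-- `σ ⊆ B`. -/
def onlyB (m : ℕ) (σ : Finset (Fin m ⊕ Fin m)) : Prop :=
  ∀ v ∈ σ, ∃ j : Fin m, v = Sum.inr j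

/-- Property `P_l` of the paper, with parameter `j1` (0-based: the paper's `j_1 - 1`, so
`1 ≤ j1 ≤ d`).  With 0-based subscripts `i_r = (r-1)(d+1)`, `j_r = j1 + (r-1)(d+1)` and
`k = m + j1 - (d+1)`:  σ ∈ M, σ ⊆ B, the `2l` smallest subscripts of σ are exactly
`0 = i_1, j_1, i_2, j_2, …, i_l, j_l`, the largest subscript is `k`, and
`σ \ {b_{i_r}} ∉ M`, `σ \ {b_{j_r}} ∉ M` for all `1 ≤ r ≤ l`. -/
def propP (m d l j1 : ℕ) (σ : Finset (Fin m ⊕ Fin m)) : Prop :=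
  σ ∈ setM m d ∧ onlyB m σ ∧ 1 ≤ j1 ∧ j1 ≤ d ∧
  (∀ r, 1 ≤ r → r ≤ l → hasB m σ ((r-1)*(d+1)) ∧ hasB m σ (j1 + (r-1)*(d+1))) ∧
  (∀ j : Fin m, Sum.inr j ∈ σ → j.val ≤ j1 + (l-1)*(d+1) →
      ∃ r, 1 ≤ r ∧ r ≤ l ∧ (j.val = (r-1)*(d+1) ∨ j.val = j1 + (r-1)*(d+1))) ∧
  hasB m σ (m + j1 - (d+1)) ∧
  (∀ j : Fin m, Sum.inr j ∈ σ → j.val ≤ m + j1 - (d+1)) ∧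
  (∀ r, 1 ≤ r → r ≤ l → ∀ j : Fin m,
      (j.val = (r-1)*(d+1) ∨ j.val = j1 + (r-1)*(d+1)) → σ.erase (Sum.inr j) ∉ setM m d)

section Matching

variable {α : Type*} [DecidableEq α] {P T : Set (Finset α)} {σ : Finset α} {l : List α} {x : α}

theorem mem_stepSurv_of_insert_notMem (hσ : σ ∈ T) (hx : x ∉ σ) (hins : insert x σ ∉ T) :
    σ ∈ stepSurv x T := by
  refine ⟨hσ, ?_⟩
  rintro (hmatched | ⟨ρ, -, rfl⟩)
  · exact hins hmatched.2.2
  · exact hx (mem_insert_self x ρ)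

theorem mem_phase_of_forall_insert_notMem (hσ : σ ∈ T) (hl : ∀ x ∈ l, x ∉ σ)
    (hins : ∀ x ∈ l, insert x σ ∉ T) : σ ∈ phase T l := by
  induction l generalizing T with
  | nil => exact hσ
  | cons y l ih =>
    rw [List.forall_mem_cons] at hl hins
    exact ih (mem_stepSurv_of_insert_notMem hσ hl.1 hins.1) hl.2 fun x hx h => hins.2 x hx h.1

theorem phase_append_singleton : phase T (l ++ [x]) = stepSurv x (phase T l) := by
  simp only [phase, List.foldl_append, List.foldl_cons, List.foldl_nil]

theorem insert_mem_phase (hP : IsLowerSet P) (hl : ∀ y ∈ l, y ∉ σ)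
    (hins : ∀ y ∈ l, insert y σ ∉ P) (hx : insert x σ ∈ P) : insert x σ ∈ phase P l := by
  refine mem_phase_of_forall_insert_notMem hx (fun y hy hmem => ?_) fun y hy hmem => ?_
  · rcases mem_insert.1 hmem with rfl | hyσ
    · exact hins y hy hx
    · exact hl y hy hyσ
  · exact hins y hy (hP (insert_subset_insert y (subset_insert x σ)) hmem)

theorem insert_notMem_of_mem_phase (hP : IsLowerSet P) (hl : ∀ x ∈ l, x ∉ σ)
    (hσ : σ ∈ phase P l) : ∀ x ∈ l, insert x σ ∉ P := by
  induction l using List.reverseRecOn with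
  | nil => exact List.forall_mem_nil _
  | append_singleton l x ih =>
    rw [List.forall_mem_append, List.forall_mem_singleton] at hl ⊢
    rw [phase_append_singleton] at hσ
    have hins : ∀ y ∈ l, insert y σ ∉ P := ih hl.1 hσ.1
    exact ⟨hins, fun hx => hσ.2 (Or.inl ⟨hσ.1, hl.2, insert_mem_phase hP hl.1 hins hx⟩)⟩

theorem mem_phase_iff_forall_insert_notMem (hP : IsLowerSet P) (hσ : σ ∈ P)
    (hl : ∀ x ∈ l, x ∉ σ) : σ ∈ phase P l ↔ ∀ x ∈ l, insert x σ ∉ P :=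
  ⟨insert_notMem_of_mem_phase hP hl, mem_phase_of_forall_insert_notMem hσ hl⟩

end Matching

section Graph

variable {m d : ℕ} {σ : Finset (Fin m ⊕ Fin m)}

theorem isLowerSet_faceP : IsLowerSet (faceP m d) :=
  fun _ _ hsub hind u hu v hv => hind u (hsub hu) v (hsub hv)

theorem insert_mem_faceP_iff {v : Fin m ⊕ Fin m} :
    insert v σ ∈ faceP m d ↔ σ ∈ faceP m d ∧ ∀ u ∈ σ, ¬ (Gmd m d).Adj v u := by
  simp only [faceP, IsInd, Set.mem_ofPred_eq, forall_mem_insert, SimpleGraph.irrefl,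
    (Gmd m d).adj_comm _ v]
  grind

theorem onlyB.mem_faceP (hB : onlyB m σ) : σ ∈ faceP m d := by
  intro u hu v hv
  obtain ⟨j, rfl⟩ := hB u hu
  obtain ⟨k, rfl⟩ := hB v hv
  simp [Gmd]

theorem onlyB.inl_notMem (hB : onlyB m σ) (i : Fin m) : Sum.inl i ∉ σ := by
  intro hi
  obtain ⟨j, hj⟩ := hB _ hi
  exact Sum.inl_ne_inr hj

theorem val_add_sub_val_mod (i j : Fin m) : (j.val + m - i.val) % m = (j - i).val := by
  rw [Fin.val_sub]
  congr 1
  omega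

theorem Gmd_adj_inl_inr {i j : Fin m} :
    (Gmd m d).Adj (Sum.inl i) (Sum.inr j) ↔ (j - i).val < d := by
  simp [Gmd, val_add_sub_val_mod]

theorem inr_mem_Bset {s j : Fin m} : Sum.inr j ∈ Bset m d s ↔ (j - s).val < m - d := by
  simp [Bset, val_add_sub_val_mod]

theorem val_sub_ofNat_lt_iff [NeZero m] (x : Fin m) :
    (x - Fin.ofNat m d).val < m - d ↔ ¬ x.val < d := by
  rcases lt_or_ge d m with hdm | hmd
  · have hd : (Fin.ofNat m d).val = d := Nat.mod_eq_of_lt hdm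
    rcases lt_or_ge x.val d with hx | hx
    · have hsub := Fin.coe_sub_iff_lt.2 (Fin.lt_def.2 (hx.trans_eq hd.symm))
      omega
    · have hsub := Fin.sub_val_of_le (Fin.le_def.2 (hd.trans_le hx))
      omega
  · omega

theorem inr_mem_Bset_add_ofNat_iff [NeZero m] {i j : Fin m} :
    Sum.inr j ∈ Bset m d (i + Fin.ofNat m d) ↔ ¬ (Gmd m d).Adj (Sum.inl i) (Sum.inr j) := by
  rw [inr_mem_Bset, Gmd_adj_inl_inr, ← sub_sub, val_sub_ofNat_lt_iff]

theorem onlyB.insert_inl_mem_faceP_iff [NeZero m] (hB : onlyB m σ) (i : Fin m) :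
    insert (Sum.inl i) σ ∈ faceP m d ↔ σ ⊆ Bset m d (i + Fin.ofNat m d) := by
  rw [insert_mem_faceP_iff, and_iff_right hB.mem_faceP]
  refine forall₂_congr fun v hv => ?_
  obtain ⟨j, rfl⟩ := hB v hv
  exact inr_mem_Bset_add_ofNat_iff.symm

end Graph

/-- for `σ ⊆ B`, `σ ∈ M` iff `σ` is not contained in any `B_s`. -/
theorem stmt6 (m d : ℕ) (hd : 1 ≤ d) (hdm : d ≤ m)
    (σ : Finset (Fin m ⊕ Fin m)) (hB : onlyB m σ) :
    σ ∈ setM m d ↔ ∀ s : Fin m, ¬ σ ⊆ Bset m d s := by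
  have : NeZero m := ⟨by omega⟩
  have hA : ∀ x ∈ listA m, x ∉ σ := by simpa [listA] using hB.inl_notMem
  calc σ ∈ setM m d
      ↔ ∀ x ∈ listA m, insert x σ ∉ faceP m d :=
        mem_phase_iff_forall_insert_notMem isLowerSet_faceP hB.mem_faceP hA
    _ ↔ ∀ i : Fin m, insert (Sum.inl i) σ ∉ faceP m d := by simp [listA]
    _ ↔ ∀ i : Fin m, ¬ σ ⊆ Bset m d (i + Fin.ofNat m d) :=
        forall_congr' fun i => not_congr (hB.insert_inl_mem_faceP_iff i)
    _ ↔ ∀ s : Fin m, ¬ σ ⊆ Bset m d s :=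
        (Equiv.addRight (Fin.ofNat m d)).forall_congr_right (q := fun s => ¬ σ ⊆ Bset m d s)
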